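/- arXiv:2507.19571 — 2 statements merged into one kernel-verified Lean document; each statement's English description precedes it below -/
import Mathlib

section
/- Let G be a finite group of minimal order among groups having an irreducible complex character of degree n, and let χ ∈ Irr(G) with χ(1) = n. If N is a proper normal subgroup of G, then gcd(|G : N|, n) > 1. -/
open FDRep Module CategoryTheory

/-- A group has an irreducible complex character of degree `n`. -/
def HasIrrCharDeg (G : Type) [Group G] (n : ℕ) : Prop :=
  ∃ V : FDRep ℂ G, Simple V ∧ finrank ℂ V = n

/-!
Let `B` be the commutant of `N` in the endomorphism algebra of `V`. Conjugation makes `H = G ⧸ N`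
act on `B`, and by Schur's lemma the only fixed points are the scalars, so that
`∑ h, h • b = (|H| * tr b / n) • 1` for every `b : B`, where `n = dim V`.

* If `b` is a central idempotent, the left-hand side is a sum of commuting idempotents, so
  `|H| * rank b / n` is an integer. As `|H|` is coprime to `n`, the rank of `b` is `0` or `n`.
  Hence `B` is a full matrix algebra, of degree `e` say, and `e` divides `n`.
* By Skolem–Noether `H` acts through conjugation by matrices of determinant one. All the matrices
  of determinant one inducing these automorphisms form a finite group, and if `s h` is one inducing
  the action of `h`, then `∑ h, tr (s h) • (s h)⁻¹ = (|H| / e) • 1`. Each `(|H| / e) * tr (s h)` is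
  an algebraic integer, hence so is `(|H| / e) ^ 2`, and `e` divides `|H|`.

So `e = 1`, that is, `V` restricts irreducibly to `N`, whose order is smaller than that of `G`.
-/

section Integrality

theorem dvd_of_isIntegral_natCast_div {K : Type*} [Field K] [CharZero K] {a b : ℕ} (hb : b ≠ 0)
    (h : IsIntegral ℤ ((a : K) / b)) : b ∣ a := by
  have h_rat : IsIntegral ℤ ((a : ℚ) / b) := by
    rw [← isIntegral_algebraMap_iff (algebraMap ℚ K).injective]
    simpa using h
  obtain ⟨z, hz⟩ := IsIntegrallyClosed.isIntegral_iff.mp h_rat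
  have hb' : (b : ℚ) ≠ 0 := by exact_mod_cast hb
  rw [eq_div_iff hb', eq_intCast] at hz
  have hz' : z * (b : ℤ) = a := by exact_mod_cast hz
  exact Int.natCast_dvd_natCast.mp ⟨z, by rw [← hz', mul_comm]⟩

theorem isIntegral_sum_of_mem_center {R B ι : Type*} [CommRing R] [Ring B] [Algebra R B]
    (s : Finset ι) {f : ι → B} (hf : ∀ i, f i ∈ Set.center B)
    (hint : ∀ i, IsIntegral R (f i)) : IsIntegral R (∑ i ∈ s, f i) := by
  have h_center : IsIntegral R (∑ i ∈ s, (⟨f i, hf i⟩ : Subalgebra.center R B)) :=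
    IsIntegral.sum _ fun i _ =>
      (isIntegral_algHom_iff (Subalgebra.center R B).val Subtype.val_injective).mp (hint i)
  simpa using h_center.map (Subalgebra.center R B).val

theorem isIntegral_of_isIdempotentElem {R B : Type*} [CommRing R] [Ring B] [Algebra R B] {f : B}
    (hf : IsIdempotentElem f) : IsIntegral R f :=
  ⟨Polynomial.X ^ 2 - Polynomial.X, Polynomial.monic_X_pow_sub
    (Polynomial.degree_X_le.trans_lt (by norm_num)),
    by simp [pow_two, hf.eq]⟩

variable (K : Type*) {A Γ : Type*} [Field K] [Ring A] [Algebra K A] [Group Γ]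

/-- The linear span of the image of `ρ` over the ring of algebraic integers of `K`. -/
noncomputable def integralSpan (ρ : Γ →* A) : Subalgebra (integralClosure ℤ K) A :=
  (MonoidAlgebra.lift (integralClosure ℤ K) A Γ ρ).range

variable {K}

theorem apply_mem_integralSpan (ρ : Γ →* A) (g : Γ) : ρ g ∈ integralSpan K ρ :=
  ⟨MonoidAlgebra.single g 1, by simp⟩

theorem smul_mem_integralSpan {ρ : Γ →* A} {c : K} (hc : IsIntegral ℤ c) {x : A}
    (hx : x ∈ integralSpan K ρ) : c • x ∈ integralSpan K ρ :=
  (integralSpan K ρ).smul_mem hx (⟨c, hc⟩ : integralClosure ℤ K)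

theorem isIntegral_of_algebraMap_mem_integralSpan [Finite Γ] [Nontrivial A] {ρ : Γ →* A} {c : K}
    (hc : algebraMap K A c ∈ integralSpan K ρ) : IsIntegral ℤ c := by
  obtain ⟨x, hx⟩ := hc
  have hx_int : IsIntegral (integralClosure ℤ K) (algebraMap K A c) :=
    hx ▸ (Algebra.IsIntegral.isIntegral x).map (MonoidAlgebra.lift (integralClosure ℤ K) A Γ ρ)
  exact isIntegral_trans (A := integralClosure ℤ K) c
    ((isIntegral_algebraMap_iff (algebraMap K A).injective).mp hx_int)

end Integrality

section Trace

variable {K V : Type*} [Field K] [AddCommGroup V] [Module K V] [FiniteDimensional K V]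

theorem trace_eq_finrank_range_of_isIdempotentElem {f : End K V} (hf : IsIdempotentElem f) :
    LinearMap.trace K V f = finrank K (LinearMap.range f) :=
  (LinearMap.IsIdempotentElem.isProj_range f hf).trace

theorem eq_zero_or_one_of_finrank_dvd_finrank_range {f : End K V} (hf : IsIdempotentElem f)
    (h_dvd : finrank K V ∣ finrank K (LinearMap.range f)) : f = 0 ∨ f = 1 := by
  rcases (finrank K (LinearMap.range f)).eq_zero_or_pos with h_rank | h_rank
  · exact .inl (LinearMap.range_eq_bot.mp (Submodule.finrank_eq_zero.mp h_rank))
  · have h_top : LinearMap.range f = ⊤ := Submodule.eq_top_of_finrank_eq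
      ((Submodule.finrank_le _).antisymm (Nat.le_of_dvd h_rank h_dvd))
    exact .inr (LinearMap.ext fun v =>
      (LinearMap.IsIdempotentElem.isProj_range f hf).map_id v (h_top ▸ Submodule.mem_top))

theorem sum_trace_smul_eq_of_sum_mul_mul_eq {ι : Type*} [Fintype ι] {S T : ι → End K V} {c : K}
    (h : ∀ X, ∑ i, S i * X * T i = algebraMap K (End K V) (c * LinearMap.trace K V X)) :
    ∑ i, LinearMap.trace K V (S i) • T i = algebraMap K (End K V) c := by
  let b := finBasis K V
  ext v
  apply b.ext_elem
  intro k
  -- evaluate `h` on the rank one endomorphisms `b.coord k ⊗ b j`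
  have h_rank_one (j) : ∑ i, b.repr (S i (b j)) j * b.repr (T i v) k =
      c * (b.repr (b j) k * b.repr v j) := by
    have := congr(b.repr ($(h ((b.coord k).smulRight (b j))) v) j)
    simpa [LinearMap.trace_smulRight, mul_comm, mul_left_comm, mul_assoc] using this
  have h_trace (f : End K V) : LinearMap.trace K V f = ∑ j, b.repr (f (b j)) j := by
    rw [LinearMap.trace_eq_matrix_trace K b]
    simp [Matrix.trace, LinearMap.toMatrix_apply]
  calc b.repr ((∑ i, LinearMap.trace K V (S i) • T i) v) k
      = ∑ j, ∑ i, b.repr (S i (b j)) j * b.repr (T i v) k := by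
        rw [Finset.sum_comm]
        simp [h_trace, LinearMap.sum_apply, Finset.sum_mul]
    _ = b.repr (algebraMap K (End K V) c v) k := by
        simp [h_rank_one, Finsupp.single_apply]

theorem card_dvd_finrank_of_matrix_algHom [CharZero K] {ι : Type*} [Fintype ι] [DecidableEq ι]
    (φ : Matrix ι ι K →ₐ[K] End K V) : Fintype.card ι ∣ finrank K V := by
  have h_sum : (finrank K V : K) = ∑ a, LinearMap.trace K V (φ (Matrix.single a a 1)) := by
    rw [← LinearMap.trace_one K V, ← map_one φ, ← Matrix.sum_single_one, map_sum, map_sum]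
  have h_trace_eq (a b : ι) : LinearMap.trace K V (φ (Matrix.single a a 1)) =
      LinearMap.trace K V (φ (Matrix.single b b 1)) := by
    have h_mul (a b : ι) :
        Matrix.single a a (1 : K) = Matrix.single a b 1 * Matrix.single b a 1 := by simp
    rw [h_mul a b, map_mul, LinearMap.trace_mul_comm, ← map_mul, ← h_mul b a]
  cases isEmpty_or_nonempty ι with
  | inl _ =>
    rw [Finset.univ_eq_empty, Finset.sum_empty, Nat.cast_eq_zero] at h_sum
    exact h_sum ▸ dvd_zero _
  | inr _ =>
    obtain ⟨a⟩ := ‹Nonempty ι›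
    have h_idem : IsIdempotentElem (φ (Matrix.single a a 1)) := by
      rw [IsIdempotentElem, ← map_mul, Matrix.single_mul_single_same, mul_one]
    rw [Finset.sum_congr rfl fun b _ => h_trace_eq b a, Finset.sum_const, Finset.card_univ,
      nsmul_eq_mul, trace_eq_finrank_range_of_isIdempotentElem h_idem] at h_sum
    exact ⟨_, by exact_mod_cast h_sum⟩

end Trace

/-- An action of a group on an algebra whose only fixed points are the scalars. -/
def IsErgodicAction {K H B : Type*} [CommSemiring K] [Group H] [Semiring B] [Algebra K B]
    (α : H →* (B ≃ₐ[K] B)) : Prop :=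
  ∀ x, (∀ h, α h x = x) → x ∈ (⊥ : Subalgebra K B)

namespace IsErgodicAction

variable {K H B : Type*} [Field K] [Group H] [Ring B] [Algebra K B] {α : H →* (B ≃ₐ[K] B)}

theorem congr {A : Type*} [Ring A] [Algebra K A] (hα : IsErgodicAction α) (e : B ≃ₐ[K] A) :
    IsErgodicAction (e.autCongr.toMonoidHom.comp α) := by
  intro x hx
  obtain ⟨c, hc⟩ := Algebra.mem_bot.mp
    (hα (e.symm x) fun h => e.injective ((hx h).trans (e.apply_symm_apply x).symm))
  exact Algebra.mem_bot.mpr ⟨c, by rw [← e.commutes, hc, e.apply_symm_apply]⟩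

theorem sum_apply [Fintype H] (hα : IsErgodicAction α) {τ : B →ₗ[K] K}
    (hτ : ∀ h b, τ (α h b) = τ b) (hτ_one : τ 1 ≠ 0) (b : B) :
    ∑ h, α h b = algebraMap K B (Nat.card H / τ 1 * τ b) := by
  have h_fixed (k : H) : α k (∑ h, α h b) = ∑ h, α h b := by
    rw [map_sum]
    exact Fintype.sum_equiv (Equiv.mulLeft k) _ _ fun h => by simp
  obtain ⟨c, hc⟩ := Algebra.mem_bot.mp (hα _ h_fixed)
  have h_trace : c * τ 1 = Nat.card H * τ b := by
    have := congrArg τ hc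
    simpa [Algebra.algebraMap_eq_smul_one, hτ] using this
  rw [← hc, div_mul_eq_mul_div, ← h_trace, mul_div_cancel_right₀ c hτ_one]

end IsErgodicAction

section SkolemNoether

variable {K V : Type*} [Field K] [AddCommGroup V] [Module K V]

variable (K V) in
/-- The action of `SL(V)` on `End V` by conjugation. -/
def slConj : SpecialLinearGroup K V →* (End K V ≃ₐ[K] End K V) where
  toFun g := (SpecialLinearGroup.toLinearEquiv g).conjAlgEquiv K
  map_one' := rfl
  map_mul' _ _ := rfl

theorem slConj_apply (g : SpecialLinearGroup K V) (X : End K V) :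
    slConj K V g X = (g : V →ₗ[K] V) * X * ((g⁻¹ : SpecialLinearGroup K V) : V →ₗ[K] V) :=
  rfl

theorem slConj_surjective [IsAlgClosed K] [FiniteDimensional K V] [Nontrivial V] :
    Function.Surjective (slConj K V) := by
  intro f
  obtain ⟨T, rfl⟩ := f.eq_linearEquivConjAlgEquiv
  obtain ⟨c, hc⟩ := IsAlgClosed.exists_pow_nat_eq (LinearEquiv.det T)⁻¹.val
    (finrank_pos (R := K) (M := V))
  have hc_ne : c ≠ 0 := by
    rintro rfl
    rw [zero_pow finrank_pos.ne'] at hc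
    exact (Units.ne_zero _) hc.symm
  let S := T.trans (LinearEquiv.smulOfNeZero K V c hc_ne)
  have h_det : LinearEquiv.det S = 1 := by
    rw [← Units.val_inj, LinearEquiv.coe_det]
    change LinearMap.det (c • (T : V →ₗ[K] V)) = 1
    rw [LinearMap.det_smul, hc, ← LinearEquiv.coe_det, Units.inv_mul]
  refine ⟨⟨S, h_det⟩, ?_⟩
  ext X v
  change c • T (X (T.symm (c⁻¹ • v))) = T (X (T.symm v))
  simp [smul_smul, hc_ne]

theorem slConj_ker_le_center : (slConj K V).ker ≤ Subgroup.center (SpecialLinearGroup K V) := by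
  intro g hg
  rw [Subgroup.mem_center_iff]
  intro h
  ext v
  have h_apply := congr($hg (h : V →ₗ[K] V) (g v))
  simpa [slConj_apply] using h_apply.symm

theorem finite_comap_slConj [FiniteDimensional K V] (P : Subgroup (End K V ≃ₐ[K] End K V))
    [Finite P] : Finite (P.comap (slConj K V)) := by
  have : NeZero (max (finrank K V) 1) := ⟨by simp⟩
  have : Finite (Subgroup.center (SpecialLinearGroup K V)) :=
    Finite.of_equiv _ SpecialLinearGroup.centerEquivRootsOfUnity.symm.toEquiv
  have : Finite ((slConj K V).subgroupComap P).ker :=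
    Finite.of_injective (fun g => (⟨g.1.1, slConj_ker_le_center (congrArg Subtype.val g.2)⟩ :
      Subgroup.center (SpecialLinearGroup K V))) fun g h hgh =>
        Subtype.ext (Subtype.ext (by simpa using hgh))
  exact ((slConj K V).subgroupComap P).finite_iff_finite_ker_range.mpr ⟨this, inferInstance⟩

end SkolemNoether

namespace IsErgodicAction

variable {K H V : Type*} [Field K] [CharZero K] [Group H] [Finite H] [AddCommGroup V] [Module K V]
  [FiniteDimensional K V] [Nontrivial V] {α : H →* (End K V ≃ₐ[K] End K V)}

theorem finrank_dvd_card_of_lift {Γ : Type*} [Group Γ] [Finite Γ] (hα : IsErgodicAction α)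
    (ρ : Γ →* End K V) (hρ : ∀ h, ∃ g, ∀ X, α h X = ρ g * X * ρ g⁻¹) :
    finrank K V ∣ Nat.card H := by
  have := Fintype.ofFinite H
  choose s hs using hρ
  have hn : (finrank K V : K) ≠ 0 := by exact_mod_cast finrank_pos.ne'
  have h_sum (X : End K V) : ∑ h, ρ (s h) * X * ρ (s h)⁻¹ =
      algebraMap K (End K V) (Nat.card H / finrank K V * LinearMap.trace K V X) := by
    simp_rw [← hs, ← LinearMap.trace_one K V]
    exact hα.sum_apply (fun h X => LinearMap.trace_map (α h) X) (by rwa [LinearMap.trace_one]) X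
  have h_integral (g : Γ) : IsIntegral ℤ (Nat.card H / finrank K V * LinearMap.trace K V (ρ g)) :=
    isIntegral_of_algebraMap_mem_integralSpan (ρ := ρ) <| by
      rw [← h_sum]
      exact sum_mem fun h _ => mul_mem (mul_mem (apply_mem_integralSpan ρ _)
        (apply_mem_integralSpan ρ _)) (apply_mem_integralSpan ρ _)
  have h_sq : IsIntegral ℤ ((Nat.card H / finrank K V : K) ^ 2) :=
    isIntegral_of_algebraMap_mem_integralSpan (ρ := ρ) <| by
      rw [sq, map_mul, ← Algebra.smul_def, ← sum_trace_smul_eq_of_sum_mul_mul_eq h_sum,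
        Finset.smul_sum]
      refine sum_mem fun h _ => ?_
      rw [smul_smul]
      exact smul_mem_integralSpan (h_integral _) (apply_mem_integralSpan ρ _)
  exact dvd_of_isIntegral_natCast_div finrank_pos.ne' (h_sq.of_pow two_pos)

theorem finrank_dvd_card [IsAlgClosed K] (hα : IsErgodicAction α) : finrank K V ∣ Nat.card H := by
  have : Finite α.range := inferInstanceAs (Finite (Set.range α))
  have := finite_comap_slConj α.range
  let ρ : α.range.comap (slConj K V) →* End K V :=
    (LinearEquiv.automorphismGroup.toLinearMapMonoidHom.comp SpecialLinearGroup.toLinearEquiv).comp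
      (Subgroup.subtype _)
  refine hα.finrank_dvd_card_of_lift ρ fun h => ?_
  obtain ⟨g, hg⟩ := slConj_surjective (α h)
  exact ⟨⟨g, h, hg.symm⟩, fun X => congr($hg.symm X)⟩

end IsErgodicAction

section CentralIdempotents

namespace IsErgodicAction

variable {K H B V : Type*} [Field K] [CharZero K] [Group H] [Finite H] [Ring B] [Algebra K B]
  [AddCommGroup V] [Module K V] [FiniteDimensional K V] [Nontrivial V] {α : H →* (B ≃ₐ[K] B)}
  {φ : B →ₐ[K] End K V}

theorem eq_zero_or_one_of_central_idempotent (hα : IsErgodicAction α) (hφ : Function.Injective φ)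
    (htrace : ∀ h b, LinearMap.trace K V (φ (α h b)) = LinearMap.trace K V (φ b))
    (hcop : (Nat.card H).Coprime (finrank K V)) {f : B} (hf : IsIdempotentElem f)
    (hf_center : f ∈ Set.center B) : f = 0 ∨ f = 1 := by
  have := Fintype.ofFinite H
  have : Nontrivial B := φ.toRingHom.domain_nontrivial
  have hn : (finrank K V : K) ≠ 0 := by exact_mod_cast finrank_pos.ne'
  have hφf : IsIdempotentElem (φ f) := hf.map φ
  set r := finrank K (LinearMap.range (φ f)) with hr
  have h_sum : ∑ h, α h f = algebraMap K B ((Nat.card H * r : ℕ) / finrank K V) := by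
    rw [hα.sum_apply (τ := LinearMap.trace K V ∘ₗ φ.toLinearMap) htrace (by simpa using hn)]
    simp [trace_eq_finrank_range_of_isIdempotentElem hφf, hr, div_mul_eq_mul_div]
  have h_integral : IsIntegral ℤ (((Nat.card H * r : ℕ) : K) / finrank K V) := by
    rw [← isIntegral_algebraMap_iff (algebraMap K B).injective, ← h_sum]
    exact isIntegral_sum_of_mem_center _ (fun h => MulEquivClass.apply_mem_center (α h) hf_center)
      fun h => isIntegral_of_isIdempotentElem (hf.map (α h))
  have h_dvd : finrank K V ∣ r := hcop.symm.dvd_of_dvd_mul_left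
    (dvd_of_isIntegral_natCast_div finrank_pos.ne' h_integral)
  exact (eq_zero_or_one_of_finrank_dvd_finrank_range hφf h_dvd).imp
    (fun h => hφ (h.trans (map_zero φ).symm)) fun h => hφ (h.trans (map_one φ).symm)

end IsErgodicAction

theorem subsingleton_of_central_idempotents_trivial {ι : Type*} {A : ι → Type*}
    [∀ i, Ring (A i)] [∀ i, Nontrivial (A i)]
    (h : ∀ f : ∀ i, A i, IsIdempotentElem f → f ∈ Set.center (∀ i, A i) → f = 0 ∨ f = 1) :
    Subsingleton ι := by
  classical
  refine ⟨fun i j => by_contra fun hij => ?_⟩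
  have h_idem : IsIdempotentElem (Pi.single i 1 : ∀ i, A i) := by
    rw [IsIdempotentElem, ← Pi.single_mul, mul_one]
  have h_center : (Pi.single i 1 : ∀ i, A i) ∈ Set.center (∀ i, A i) := by
    rw [Semigroup.mem_center_iff]
    intro x
    ext k
    rcases eq_or_ne k i with rfl | hki
    · simp
    · simp [hki]
  rcases h _ h_idem h_center with h_zero | h_one
  · exact one_ne_zero (Pi.single_eq_zero_iff.mp h_zero)
  · exact zero_ne_one ((Pi.single_eq_of_ne' hij 1).symm.trans (congrFun h_one j))

theorem exists_algEquiv_matrix_of_central_idempotents_trivial (K : Type*) {B : Type*} [Field K]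
    [IsAlgClosed K] [Ring B] [Nontrivial B] [Algebra K B] [FiniteDimensional K B]
    [IsSemisimpleRing B] (h : ∀ f : B, IsIdempotentElem f → f ∈ Set.center B → f = 0 ∨ f = 1) :
    ∃ n, NeZero n ∧ Nonempty (B ≃ₐ[K] Matrix (Fin n) (Fin n) K) := by
  obtain ⟨m, d, hd, ⟨e⟩⟩ := IsSemisimpleRing.exists_algEquiv_pi_matrix_of_isAlgClosed K B
  have : Subsingleton (Fin m) := subsingleton_of_central_idempotents_trivial
    (A := fun i => Matrix (Fin (d i)) (Fin (d i)) K) fun f hf hf_center => by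
      simpa using h (e.symm f) (hf.map e.symm) (MulEquivClass.apply_mem_center e.symm hf_center)
  obtain ⟨i⟩ : Nonempty (Fin m) := by
    by_contra h_empty
    rw [not_nonempty_iff] at h_empty
    exact not_subsingleton B e.injective.subsingleton
  have := uniqueOfSubsingleton i
  exact ⟨d default, hd default, ⟨e.trans (AlgEquiv.ofBijective (Pi.evalAlgHom K _ default)
    (Equiv.piUnique fun i => Matrix (Fin (d i)) (Fin (d i)) K).bijective)⟩⟩

theorem IsErgodicAction.finrank_eq_one {K H B V : Type*} [Field K] [IsAlgClosed K] [CharZero K]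
    [Group H] [Finite H] [Ring B] [Algebra K B] [IsSemisimpleRing B] [AddCommGroup V] [Module K V]
    [FiniteDimensional K V] [Nontrivial V] {α : H →* (B ≃ₐ[K] B)} {φ : B →ₐ[K] End K V}
    (hα : IsErgodicAction α) (hφ : Function.Injective φ)
    (htrace : ∀ h b, LinearMap.trace K V (φ (α h b)) = LinearMap.trace K V (φ b))
    (hcop : (Nat.card H).Coprime (finrank K V)) : finrank K B = 1 := by
  have : Nontrivial B := φ.toRingHom.domain_nontrivial
  have : FiniteDimensional K B := Module.Finite.of_injective φ.toLinearMap hφ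
  obtain ⟨d, hd, ⟨e⟩⟩ := exists_algEquiv_matrix_of_central_idempotents_trivial K
    fun f hf hf_center => hα.eq_zero_or_one_of_central_idempotent hφ htrace hcop hf hf_center
  have hd_rank : finrank K B = d * d := by
    rw [e.toLinearEquiv.finrank_eq]
    simp [finrank_matrix]
  have hd_card : d ∣ Nat.card H := by
    simpa using (hα.congr (e.trans Matrix.toLinAlgEquiv')).finrank_dvd_card
  have hd_finrank : d ∣ finrank K V := by
    simpa using card_dvd_finrank_of_matrix_algHom (φ.comp e.symm.toAlgHom)
  rw [hd_rank, Nat.eq_one_of_dvd_coprimes hcop hd_card hd_finrank]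

end CentralIdempotents

section Restriction

open Representation

variable {K G V : Type*} [Field K] [Group G] [AddCommGroup V] [Module K V]

instance instRingIntertwiningMap (ρ : Representation K G V) : Ring (IntertwiningMap ρ ρ) :=
  { (inferInstance : Semiring (IntertwiningMap ρ ρ)),
    (inferInstance : AddCommGroup (IntertwiningMap ρ ρ)) with }

theorem isSemisimpleRing_intertwiningMap [Finite G] [NeZero (Nat.card G : K)]
    [FiniteDimensional K V] (ρ : Representation K G V) :
    IsSemisimpleRing (IntertwiningMap ρ ρ) := by
  have : Module.Finite K ρ.asModule := inferInstanceAs (Module.Finite K V)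
  have : Module.Finite (MonoidAlgebra K G) ρ.asModule := .of_restrictScalars_finite K _ _
  have : IsSemisimpleRing (End (MonoidAlgebra K G) ρ.asModule) := .moduleEnd _ _
  exact (IntertwiningMap.equivAlgEnd (ρ := ρ)).symm.toRingEquiv.isSemisimpleRing

variable (ρ : Representation K G V)

/-- Forgetting equivariance, as a homomorphism of algebras. -/
def intertwiningMapToEnd : IntertwiningMap ρ ρ →ₐ[K] End K V :=
  AlgHom.ofLinearMap (IntertwiningMap.toLinearMapl ..) rfl fun _ _ => rfl

/-- The algebra of endomorphisms of `V` commuting with the action of `N`. -/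
abbrev Commutant (N : Subgroup G) : Type _ :=
  IntertwiningMap (ρ.comp N.subtype) (ρ.comp N.subtype)

variable {ρ} in
theorem toLinearMap_mul_apply_of_mem {N : Subgroup G} (f : Commutant ρ N) {x : G} (hx : x ∈ N) :
    f.toLinearMap * ρ x = ρ x * f.toLinearMap :=
  f.isIntertwining' ⟨x, hx⟩

variable (N : Subgroup G) [hN : N.Normal]

variable {ρ N} in
theorem conj_mul_apply_of_mem (f : Commutant ρ N) (g : G) {x : G} (hx : x ∈ N) :
    ρ g * f.toLinearMap * ρ g⁻¹ * ρ x = ρ x * (ρ g * f.toLinearMap * ρ g⁻¹) :=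
  calc ρ g * f.toLinearMap * ρ g⁻¹ * ρ x
      = ρ g * (f.toLinearMap * ρ (g⁻¹ * x * g)) * ρ g⁻¹ := by simp [mul_assoc, ← map_mul]
    _ = ρ (g * (g⁻¹ * x * g)) * f.toLinearMap * ρ g⁻¹ := by
        rw [toLinearMap_mul_apply_of_mem f (by simpa using hN.conj_mem x hx g⁻¹), map_mul ρ g,
          ← mul_assoc]
    _ = ρ x * (ρ g * f.toLinearMap * ρ g⁻¹) := by simp [mul_assoc]

/-- The action of `G` by conjugation on the endomorphisms of `V` commuting with the normal
subgroup `N`. -/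
def restrictConj : G →* (Commutant ρ N ≃ₐ[K] Commutant ρ N) :=
  (AlgEquiv.algHomUnitsEquiv K _).toMonoidHom.comp <| MonoidHom.toHomUnits
    { toFun g := AlgHom.ofLinearMap
        { toFun f := ⟨ρ g * f.toLinearMap * ρ g⁻¹, fun x => conj_mul_apply_of_mem f g x.2⟩
          map_add' f₁ f₂ := by ext; simp
          map_smul' c f := by ext; simp }
        (by ext; simp) fun f₁ f₂ => by ext; simp
      map_one' := by ext; simp
      map_mul' g h := by ext; simp }

theorem restrictConj_toLinearMap (g : G) (f : Commutant ρ N) :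
    (restrictConj ρ N g f).toLinearMap = ρ g * f.toLinearMap * ρ g⁻¹ :=
  rfl

theorem trace_restrictConj (g : G) (f : Commutant ρ N) :
    LinearMap.trace K V (restrictConj ρ N g f).toLinearMap = LinearMap.trace K V f.toLinearMap := by
  rw [restrictConj_toLinearMap, LinearMap.trace_mul_comm, ← mul_assoc, ← map_mul, inv_mul_cancel,
    map_one, one_mul]

theorem restrictConj_of_mem {g : G} (hg : g ∈ N) : restrictConj ρ N g = 1 := by
  ext1 f
  apply IntertwiningMap.ext
  rw [restrictConj_toLinearMap, ← toLinearMap_mul_apply_of_mem f hg, mul_assoc, ← map_mul,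
    mul_inv_cancel, map_one, mul_one]
  rfl

/-- The action of `G ⧸ N` induced by `restrictConj`. -/
def quotientConj : G ⧸ N →* (Commutant ρ N ≃ₐ[K] Commutant ρ N) :=
  QuotientGroup.lift N (restrictConj ρ N) fun _ => restrictConj_of_mem ρ N

variable {ρ}

theorem isErgodicAction_quotientConj (hρ : finrank K (IntertwiningMap ρ ρ) = 1) :
    IsErgodicAction (quotientConj ρ N) := by
  intro f hf
  have hf_comm (g : G) : f.toLinearMap ∘ₗ ρ g = ρ g ∘ₗ f.toLinearMap := by
    have h_fixed : ρ g * f.toLinearMap * ρ g⁻¹ = f.toLinearMap := congr($(hf g).toLinearMap)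
    change f.toLinearMap * ρ g = ρ g * f.toLinearMap
    rw [← h_fixed, mul_assoc _ (ρ g⁻¹), ← map_mul, inv_mul_cancel, map_one, mul_one, h_fixed]
  have := nontrivial_of_finrank_eq_succ hρ
  obtain ⟨c, hc⟩ := (finrank_eq_one_iff_of_nonzero' (1 : IntertwiningMap ρ ρ) one_ne_zero).mp hρ
    ⟨f.toLinearMap, hf_comm⟩
  exact Algebra.mem_bot.mpr ⟨c, IntertwiningMap.ext congr(($hc).toLinearMap)⟩

theorem finrank_intertwiningMap_restrict_eq_one [IsAlgClosed K] [CharZero K] [Finite G]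
    [FiniteDimensional K V] (hρ : finrank K (IntertwiningMap ρ ρ) = 1)
    (hcop : N.index.Coprime (finrank K V)) : finrank K (Commutant ρ N) = 1 := by
  have : NeZero (Nat.card N : K) := ⟨by exact_mod_cast Nat.card_pos.ne'⟩
  have : IsSemisimpleRing (Commutant ρ N) := isSemisimpleRing_intertwiningMap _
  have : Nontrivial V := by
    by_contra h
    rw [not_nontrivial_iff_subsingleton] at h
    have : Subsingleton (IntertwiningMap ρ ρ) :=
      (IntertwiningMap.toLinearMap_injective ρ ρ).subsingleton
    exact zero_ne_one (finrank_zero_of_subsingleton.symm.trans hρ)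
  refine (isErgodicAction_quotientConj N hρ).finrank_eq_one
    (φ := intertwiningMapToEnd (ρ.comp N.subtype)) (IntertwiningMap.toLinearMap_injective _ _) ?_
    hcop
  intro h f
  obtain ⟨g, rfl⟩ := QuotientGroup.mk_surjective h
  exact trace_restrictConj ρ N g f

end Restriction

section FDRep

universe u

variable {K G : Type u} [Field K] [Group G]

theorem finrank_end_eq_finrank_intertwiningMap (V : FDRep K G) :
    finrank K (V ⟶ V) = finrank K (Representation.IntertwiningMap V.ρ V.ρ) :=
  ((FDRep.forget₂HomLinearEquiv V V).symm.trans (Rep.homLinearEquiv _ _)).finrank_eq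

theorem simple_restrict_of_coprime_index [IsAlgClosed K] [CharZero K] [Finite G] (V : FDRep K G)
    [Simple V] (N : Subgroup G) [N.Normal] (hcop : N.index.Coprime (finrank K V)) :
    Simple (FDRep.of ((V.ρ : Representation K G V).comp N.subtype)) := by
  have : NeZero (Nat.card N : K) := ⟨by exact_mod_cast Nat.card_pos.ne'⟩
  rw [FDRep.simple_iff_end_is_rank_one, finrank_end_eq_finrank_intertwiningMap]
  refine finrank_intertwiningMap_restrict_eq_one (ρ := V.ρ) N ?_ hcop
  rw [← finrank_end_eq_finrank_intertwiningMap, finrank_endomorphism_simple_eq_one K V]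

end FDRep

/-- If `G` is of minimal order with an irreducible character of degree `n`, and `N` is a
proper normal subgroup, then `gcd(|G:N|, n) > 1`. -/
theorem stmt_1 {G : Type} [Group G] [Fintype G] {n : ℕ}
    (V : FDRep ℂ G) [Simple V] (hdeg : finrank ℂ V = n)
    (hmin : ∀ (G' : Type) [Group G'] [Fintype G'],
      Fintype.card G' < Fintype.card G → ¬ HasIrrCharDeg G' n)
    (N : Subgroup G) (hN : N.Normal) (hprop : N ≠ ⊤) :
    1 < Nat.gcd N.index n := by
  classical
  have h_card : Fintype.card N < Fintype.card G := by
    rw [← Nat.card_eq_fintype_card, ← Nat.card_eq_fintype_card]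
    exact N.card_le_card_group.lt_of_ne fun h => hprop (N.eq_top_of_card_eq h)
  have h_not_coprime : ¬ N.index.Coprime n := fun hcop =>
    hmin N h_card ⟨_, simple_restrict_of_coprime_index V N (hdeg ▸ hcop), hdeg⟩
  have h_pos : 0 < N.index.gcd n := Nat.gcd_pos_of_pos_left n N.index_ne_zero_of_finite.pos
  exact lt_of_le_of_ne h_pos (Ne.symm h_not_coprime)
end

section
/- Let G be a finite group with an abelian normal subgroup A. Then every irreducible complex character degree of G divides the index |G : A| (Ito's theorem, divisibility form). -/
open FDRep Module CategoryTheory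

/-!
Let `V` be irreducible of degree `d`, let `w ≠ 0` be a common eigenvector of `A` with
character `χ`, and let `P` be the projection of `V` onto the `χ`-eigenspace of `A`. By Schur's
lemma `d • ∑ g, tr (P g⁻¹) • g = |G| • P`. Evaluated at `w`, the summand `tr (P g⁻¹) • g w`
depends only on the coset `g A`, so that `(|G : A| / d) • w = ∑ s, tr (P s⁻¹) • s w` over a
transversal of `A`. The traces are algebraic integers: if `g` fixes `χ` then `P` and `g`
commute, so that the eigenvalues of `P g` are roots of unity or `0`, and otherwise `tr (P g) =
0`. Hence `|G : A| / d` maps the span of the orbit of `w` over the algebraic integers into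
itself, so it is an algebraic integer, and being rational it is an integer.
-/

open scoped MonoidAlgebra

section Integrality

lemma isIntegral_of_pow_succ_eq_self {R A : Type*} [CommRing R] [Ring A] [Algebra R A] {x : A}
    {n : ℕ} (hn : n ≠ 0) (hx : x ^ (n + 1) = x) : IsIntegral R x := by
  refine ⟨.X ^ (n + 1) - .X, Polynomial.monic_X_pow_sub ?_, by simp [hx]⟩
  exact Polynomial.degree_X_le.trans_lt
    (by exact_mod_cast Nat.lt_add_of_pos_left (Nat.pos_of_ne_zero hn))

lemma isIntegral_trace {R k V : Type*} [CommRing R] [Field k] [IsAlgClosed k] [Algebra R k]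
    [AddCommGroup V] [Module R V] [Module k V] [IsScalarTower R k V] [FiniteDimensional k V]
    {f : End k V} (hf : IsIntegral R f) : IsIntegral R (LinearMap.trace k V f) := by
  obtain ⟨p, hp, hpf⟩ := hf
  rw [End.trace_eq_sum_roots_charpoly_of_splits (IsAlgClosed.splits _)]
  refine IsIntegral.multiset_sum fun μ hμ => ⟨p, hp, ?_⟩
  have hμ_eig : f.HasEigenvalue μ :=
    (End.hasEigenvalue_iff_isRoot_charpoly f μ).2 (Polynomial.isRoot_of_mem_roots hμ)
  obtain ⟨v, hv⟩ := hμ_eig.exists_hasEigenvector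
  have hpμ : (p.map (algebraMap R k)).eval μ • v = 0 := by
    rw [← End.aeval_apply_of_hasEigenvector hv, Polynomial.aeval_map_algebraMap,
      Polynomial.aeval_def, hpf, LinearMap.zero_apply]
  rw [← Polynomial.eval_map]
  exact (smul_eq_zero.1 hpμ).resolve_right hv.2

lemma isIntegral_of_smul_eq_sum_smul {R k G V ι : Type*} [CommRing R] [Field k] [Algebra R k]
    [Monoid G] [Finite G] [AddCommGroup V] [Module k V] [Fintype ι] (ρ : Representation k G V)
    {w : V} (hw : w ≠ 0) {x : ι → G} {t : ι → k} (ht : ∀ i, IsIntegral R (t i)) {c : k}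
    (hc : c • w = ∑ i, t i • ρ (x i) w) : IsIntegral R c := by
  let N := Submodule.span (integralClosure R k) (Set.range fun g => ρ g w)
  have hN (g : G) : ρ g w ∈ N := Submodule.subset_span ⟨g, rfl⟩
  have hN_ne : N ≠ ⊥ := (Submodule.ne_bot_iff N).2 ⟨w, by simpa using hN 1, hw⟩
  have hcN_gen (g : G) : c • ρ g w ∈ N := by
    have : c • ρ g w = ∑ i, t i • ρ (g * x i) w := by
      simp only [← map_smul, hc, map_sum, map_mul, End.mul_apply]
    rw [this]
    exact N.sum_mem fun i _ => N.smul_mem (⟨t i, ht i⟩ : integralClosure R k) (hN _)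
  have hcN : N ≤ N.comap (DistribSMul.toLinearMap (integralClosure R k) V c) :=
    Submodule.span_le.2 (Set.range_subset_iff.2 hcN_gen)
  exact isIntegral_trans c
    (isIntegral_of_smul_mem_submodule N hN_ne (Submodule.fg_span (Set.finite_range _)) c hcN)

lemma dvd_of_isIntegral_div {k : Type*} [Field k] [CharZero k] {a b : ℕ} (hb : b ≠ 0)
    (h : IsIntegral ℤ (a / b : k)) : b ∣ a := by
  have hq : IsIntegral ℤ (a / b : ℚ) :=
    (isIntegral_algebraMap_iff (algebraMap ℚ k).injective).1 (by simpa using h)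
  obtain ⟨z, hz⟩ := IsIntegrallyClosed.isIntegral_iff.1 hq
  rw [eq_div_iff (Nat.cast_ne_zero.2 hb), mul_comm, eq_intCast] at hz
  exact Int.natCast_dvd_natCast.1 ⟨z, by exact_mod_cast hz.symm⟩

end Integrality

lemma sum_eq_card_nsmul_sum_transversal {G M : Type*} [Group G] [Fintype G] [AddCommMonoid M]
    {A : Subgroup G} {S : Set G} [Fintype S] (hS : Subgroup.IsComplement S A) {f : G → M}
    (hf : ∀ g, ∀ a ∈ A, f (g * a) = f g) : ∑ g, f g = Nat.card A • ∑ s : S, f s := by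
  have : Fintype A := Fintype.ofFinite A
  have hf_equiv (s : S) (a : A) : f (hS.equiv.symm (s, a)) = f s := hf s a a.2
  calc
    ∑ g, f g = ∑ x : S × A, f (hS.equiv.symm x) := (hS.equiv.symm.sum_comp f).symm
    _ = ∑ s : S, ∑ a : A, f (hS.equiv.symm (s, a)) := Fintype.sum_prod_type _
    _ = Nat.card A • ∑ s : S, f s := by
      simp only [hf_equiv, Finset.sum_const, Finset.card_univ, Nat.card_eq_fintype_card,
        Finset.smul_sum]

section Eigenvector

lemma exists_algHom_forall_smul_eq {k A M : Type*} [Field k] [Ring A] [Algebra k A]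
    [AddCommGroup M] [Module k M] [Module A M] [IsScalarTower k A M] (hM : finrank k M = 1) :
    ∃ χ : A →ₐ[k] k, ∀ (x : A) (m : M), x • m = χ x • m := by
  have hEnd : finrank k (End k M) = 1 := by
    have : FiniteDimensional k M := .of_finrank_pos (hM ▸ one_pos)
    rw [finrank_linearMap, hM]
  let e : k ≃ₐ[k] End k M := .ofBijective (Algebra.ofId k _)
    (Free.bijective_algebraMap_of_finrank_eq_one (R := k) hEnd)
  refine ⟨e.symm.toAlgHom.comp (Algebra.lsmul k k M), fun x m => ?_⟩
  exact (LinearMap.congr_fun (e.apply_symm_apply (Algebra.lsmul k k M x)) m).symm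

lemma exists_eigenvector_of_isMulCommutative {k H V : Type*} [Field k] [IsAlgClosed k] [Monoid H]
    [IsMulCommutative H] [AddCommGroup V] [Module k V] [FiniteDimensional k V] [Nontrivial V]
    (σ : Representation k H V) : ∃ (χ : H →* k) (w : V), w ≠ 0 ∧ ∀ h, σ h w = χ h • w := by
  let : CommMonoid H := { mul_comm := mul_comm' }
  have : FiniteDimensional k σ.asModule := inferInstanceAs (FiniteDimensional k V)
  have : IsArtinian k[H] σ.asModule := isArtinian_of_tower k inferInstance
  have : Nontrivial σ.asModule := inferInstanceAs (Nontrivial V)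
  obtain ⟨S, hS⟩ := IsAtomic.exists_atom (Submodule k[H] σ.asModule)
  have : IsSimpleModule k[H] S := isSimpleModule_iff_isAtom.2 hS
  have : FiniteDimensional k S := .of_injective (S.subtype.restrictScalars k) S.subtype_injective
  obtain ⟨χ, hχ⟩ := exists_algHom_forall_smul_eq (A := k[H])
    (IsSimpleModule.finrank_eq_one_of_isMulCommutative k[H] S k)
  have : Nontrivial S := IsSimpleModule.nontrivial k[H] S
  obtain ⟨s, hs⟩ := exists_ne (0 : S)
  refine ⟨χ.toMonoidHom.comp (MonoidAlgebra.of k H), s.1, Subtype.coe_ne_coe.2 hs, fun h => ?_⟩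
  rw [← σ.asAlgebraHom_of]
  exact congrArg Subtype.val (hχ (.of k H h) s)

end Eigenvector

section CharProj

variable {k H V : Type*} [Field k] [Group H] [Fintype H] [AddCommGroup V] [Module k V]

/-- The operator `|H|⁻¹ ∑ h, χ(h)⁻¹ σ(h)` attached to a linear character `χ` of `H`. If `|H|` is
invertible in `k`, it is the projection onto the common eigenspace on which `H` acts through `χ`;
if `|H| = 0` in `k`, it is `0`. -/
noncomputable def charProj (σ : Representation k H V) (χ : H →* k) : End k V :=
  (Fintype.card H : k)⁻¹ • ∑ h, (χ h)⁻¹ • σ h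

variable (σ : Representation k H V) (χ : H →* k)

lemma mul_charProj (b : H) : σ b * charProj σ χ = χ b • charProj σ χ := by
  have hχb : χ b ≠ 0 := ((Group.isUnit b).map χ).ne_zero
  simp only [charProj, mul_smul_comm, smul_comm (χ b), Finset.mul_sum, Finset.smul_sum (r := χ b)]
  congr 1
  refine Fintype.sum_equiv (Equiv.mulLeft b) _ _ fun h => ?_
  rw [Equiv.coe_mulLeft, map_mul, map_mul, smul_smul, mul_inv_rev, inv_mul_cancel_right₀ hχb]

lemma charProj_mul (b : H) : charProj σ χ * σ b = χ b • charProj σ χ := by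
  have hχb : χ b ≠ 0 := ((Group.isUnit b).map χ).ne_zero
  simp only [charProj, smul_mul_assoc, smul_comm (χ b), Finset.sum_mul, Finset.smul_sum (r := χ b)]
  congr 1
  refine Fintype.sum_equiv (Equiv.mulRight b) _ _ fun h => ?_
  rw [Equiv.coe_mulRight, map_mul, map_mul, smul_smul, mul_inv, inv_mul_cancel_right₀ hχb]

variable {σ χ}

lemma charProj_apply_of_forall_smul [NeZero (Fintype.card H : k)] {w : V}
    (hw : ∀ h, σ h w = χ h • w) : charProj σ χ w = w := by
  have hterm (h : H) : ((χ h)⁻¹ • σ h) w = w := by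
    rw [LinearMap.smul_apply, hw, inv_smul_smul₀ ((Group.isUnit h).map χ).ne_zero]
  rw [charProj, LinearMap.smul_apply, LinearMap.sum_apply, Finset.sum_congr rfl fun h _ => hterm h,
    Finset.sum_const, Finset.card_univ, ← Nat.cast_smul_eq_nsmul k, inv_smul_smul₀ (NeZero.ne _)]

variable (σ χ) in
lemma isIdempotentElem_charProj [NeZero (Fintype.card H : k)] : IsIdempotentElem (charProj σ χ) :=
  LinearMap.ext fun v =>
    charProj_apply_of_forall_smul fun h => LinearMap.congr_fun (mul_charProj σ χ h) v

lemma commute_charProj {T : End k V} {φ : H ≃ H} (hT : ∀ h, T * σ h = σ (φ h) * T)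
    (hφ : ∀ h, χ (φ h) = χ h) : Commute (charProj σ χ) T := by
  symm
  simp only [commute_iff_eq, charProj, mul_smul_comm, smul_mul_assoc, Finset.mul_sum,
    Finset.sum_mul]
  congr 1
  exact Fintype.sum_equiv φ _ _ fun h => by rw [hT, hφ]

lemma trace_charProj_mul_eq_zero {T : End k V} {a b : H} (hT : T * σ a = σ b * T)
    (hab : χ b ≠ χ a) : LinearMap.trace k V (charProj σ χ * T) = 0 := by
  have h : χ b * LinearMap.trace k V (charProj σ χ * T) =
      χ a * LinearMap.trace k V (charProj σ χ * T) := calc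
    _ = LinearMap.trace k V (charProj σ χ * (σ b * T)) := by
      rw [← mul_assoc, charProj_mul, smul_mul_assoc, map_smul, smul_eq_mul]
    _ = LinearMap.trace k V (σ a * charProj σ χ * T) := by
      rw [← hT, ← mul_assoc, LinearMap.trace_mul_comm, mul_assoc]
    _ = _ := by rw [mul_charProj, smul_mul_assoc, map_smul, smul_eq_mul]
  by_contra h0
  exact hab (mul_right_cancel₀ h0 h)

lemma isIntegral_trace_charProj_mul [IsAlgClosed k] [FiniteDimensional k V]
    [NeZero (Fintype.card H : k)] {T : End k V} {n : ℕ} (hn : n ≠ 0) (hTn : T ^ n = 1)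
    {φ : H ≃ H} (hT : ∀ h, T * σ h = σ (φ h) * T) :
    IsIntegral ℤ (LinearMap.trace k V (charProj σ χ * T)) := by
  by_cases hφ : ∀ h, χ (φ h) = χ h
  · refine isIntegral_trace (isIntegral_of_pow_succ_eq_self hn ?_)
    rw [(commute_charProj hT hφ).mul_pow, (isIdempotentElem_charProj σ χ).pow_succ_eq, pow_succ,
      hTn, one_mul]
  · obtain ⟨h, hh⟩ := not_forall.1 hφ
    rw [trace_charProj_mul_eq_zero (hT h) hh]
    exact isIntegral_zero

end CharProj

section Schur

variable {k G V : Type*} [Field k] [IsAlgClosed k] [Group G] [AddCommGroup V] [Module k V]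
  [FiniteDimensional k V] (ρ : Representation k G V) [ρ.IsIrreducible]

lemma exists_eq_smul_one_of_commute {f : End k V} (hf : ∀ g, Commute f (ρ g)) :
    ∃ c : k, f = c • 1 := by
  obtain ⟨c, hc⟩ :=
    (Representation.IsIrreducible.algebraMap_intertwiningMap_bijective_of_isAlgClosed (ρ := ρ)).2
      ⟨f, fun g => hf g⟩
  exact ⟨c, congr(($hc).toLinearMap).symm⟩

variable [Fintype G]

lemma finrank_smul_sum_conj (Y : End k V) :
    (finrank k V : k) • ∑ g, ρ g * Y * ρ g⁻¹ =
      ((Fintype.card G : k) * LinearMap.trace k V Y) • (1 : End k V) := by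
  have hcomm (h : G) : Commute (∑ g, ρ g * Y * ρ g⁻¹) (ρ h) := by
    symm
    rw [commute_iff_eq, Finset.sum_mul, Finset.mul_sum]
    refine Fintype.sum_equiv (Equiv.mulLeft h) _ _ fun g => ?_
    simp only [Equiv.coe_mulLeft, mul_inv_rev, map_mul, mul_assoc]
    rw [← map_mul ρ h⁻¹, inv_mul_cancel, map_one, mul_one]
  have htrace : LinearMap.trace k V (∑ g, ρ g * Y * ρ g⁻¹) =
      Fintype.card G * LinearMap.trace k V Y := by
    have (g : G) : LinearMap.trace k V (ρ g * Y * ρ g⁻¹) = LinearMap.trace k V Y := by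
      rw [LinearMap.trace_mul_comm, ← mul_assoc, ← map_mul, inv_mul_cancel, map_one, one_mul]
    simp only [map_sum, this, Finset.sum_const, Finset.card_univ, nsmul_eq_mul]
  obtain ⟨c, hc⟩ := exists_eq_smul_one_of_commute ρ hcomm
  rw [← htrace, hc, map_smul, LinearMap.trace_one, smul_smul, smul_eq_mul, mul_comm]

lemma finrank_smul_sum_trace_smul (X : End k V) :
    (finrank k V : k) • ∑ g, LinearMap.trace k V (X * ρ g⁻¹) • ρ g = (Fintype.card G : k) • X := by
  obtain ⟨t, rfl⟩ := (dualTensorHomEquiv k V V).surjective X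
  induction t with
  | zero => simp
  | add s t hs ht =>
    simp only [map_add, add_mul, add_smul, Finset.sum_add_distrib, smul_add, hs, ht]
  | tmul φ u =>
    have hrank_one : dualTensorHomEquiv k V V (φ ⊗ₜ u) = φ.smulRight u := by ext; simp
    have htrace (g : G) : LinearMap.trace k V (φ.smulRight u * ρ g⁻¹) = φ (ρ g⁻¹ u) :=
      LinearMap.trace_smulRight (φ ∘ₗ ρ g⁻¹) u
    rw [hrank_one]
    ext v
    -- Averaging the rank-one operator `φ ⊗ v` and evaluating at `u` gives the claim at `v`.
    simpa [htrace, smul_smul] using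
      LinearMap.congr_fun (finrank_smul_sum_conj ρ (φ.smulRight v)) u

end Schur

section Ito

variable {k G V : Type*} [Field k] [IsAlgClosed k] [Group G] [AddCommGroup V] [Module k V]
  [FiniteDimensional k V] (ρ : Representation k G V) [ρ.IsIrreducible] {A : Subgroup G}

lemma finrank_smul_sum_transversal [Finite G] [Fintype A] [NeZero (Fintype.card A : k)] {S : Set G}
    [Fintype S] (hS : Subgroup.IsComplement S A) {χ : A →* k} {w : V}
    (hw : ∀ a : A, ρ a w = χ a • w) :
    (finrank k V : k) • ∑ s : S,
      LinearMap.trace k V (charProj (ρ.comp A.subtype) χ * ρ (s : G)⁻¹) • ρ s w =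
        (A.index : k) • w := by
  have : Fintype G := Fintype.ofFinite G
  let P : End k V := charProj (ρ.comp A.subtype) χ
  let f (g : G) : V := LinearMap.trace k V (P * ρ g⁻¹) • ρ g w
  have hPw : P w = w := charProj_apply_of_forall_smul hw
  have hf (g : G) (a : G) (ha : a ∈ A) : f (g * a) = f g := by
    lift a to A using ha
    have hP : P * ρ (a : G)⁻¹ = χ a⁻¹ • P := charProj_mul (ρ.comp A.subtype) χ a⁻¹
    have htrace : LinearMap.trace k V (P * ρ (g * a)⁻¹) =
        χ a⁻¹ * LinearMap.trace k V (P * ρ g⁻¹) := by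
      rw [mul_inv_rev, map_mul ρ, ← mul_assoc, hP, smul_mul_assoc, map_smul, smul_eq_mul]
    have hsmul : ρ (g * a) w = χ a • ρ g w := by rw [map_mul, End.mul_apply, hw, map_smul]
    have hχ : χ a⁻¹ * χ a = 1 := by rw [← map_mul, inv_mul_cancel, map_one]
    simp only [f, htrace, hsmul, smul_smul, mul_right_comm, hχ, one_mul]
  have hcosets : ∑ g, f g = (Fintype.card A : k) • ∑ s : S, f s := by
    rw [sum_eq_card_nsmul_sum_transversal hS hf, Nat.card_eq_fintype_card, Nat.cast_smul_eq_nsmul]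
  have hSchur : (finrank k V : k) • ∑ g, f g = (Fintype.card G : k) • w := by
    simpa [f, hPw] using LinearMap.congr_fun (finrank_smul_sum_trace_smul ρ P) w
  have hcard : (Fintype.card G : k) = Fintype.card A * A.index := by
    rw [← Nat.cast_mul, ← Nat.card_eq_fintype_card, ← Nat.card_eq_fintype_card, A.card_mul_index]
  rw [hcosets, smul_comm, hcard, mul_smul] at hSchur
  exact smul_right_injective V (NeZero.ne (Fintype.card A : k)) hSchur

lemma finrank_dvd_index_of_eigenvector [CharZero k] [Finite G] [A.Normal] {χ : A →* k} {w : V}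
    (hw_ne : w ≠ 0) (hw : ∀ a : A, ρ a w = χ a • w) : finrank k V ∣ A.index := by
  have : Fintype A := Fintype.ofFinite A
  obtain ⟨S, hS, -⟩ := A.exists_isComplement_left 1
  have : Fintype S := Fintype.ofFinite S
  have htrace (g : G) :
      IsIntegral ℤ (LinearMap.trace k V (charProj (ρ.comp A.subtype) χ * ρ g)) :=
    isIntegral_trace_charProj_mul (φ := (MulAut.conjNormal g).toEquiv) Nat.card_pos.ne'
      (by rw [← map_pow, pow_card_eq_one', map_one]) fun a => by simp [← map_mul]
  have : Nontrivial V := nontrivial_of_ne w 0 hw_ne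
  have hd : (finrank k V : k) ≠ 0 := Nat.cast_ne_zero.2 finrank_pos.ne'
  refine dvd_of_isIntegral_div (k := k) finrank_pos.ne'
    (isIntegral_of_smul_eq_sum_smul ρ hw_ne (x := fun s : S => (s : G))
      (fun s : S => htrace (s : G)⁻¹) ?_)
  rw [div_eq_inv_mul, mul_smul, ← finrank_smul_sum_transversal ρ hS hw, inv_smul_smul₀ hd]

end Ito

theorem stmt_14_general {k G V : Type*} [Field k] [IsAlgClosed k] [CharZero k] [Group G] [Finite G]
    [AddCommGroup V] [Module k V] [FiniteDimensional k V] (ρ : Representation k G V)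
    [ρ.IsIrreducible] (A : Subgroup G) [A.Normal] [IsMulCommutative A] :
    finrank k V ∣ A.index := by
  have : Nontrivial V := IsSimpleModule.nontrivial k[G] ρ.asModule
  obtain ⟨χ, w, hw_ne, hw⟩ := exists_eigenvector_of_isMulCommutative (ρ.comp A.subtype)
  exact finrank_dvd_index_of_eigenvector ρ hw_ne hw

lemma isIrreducible_of_simple {k G : Type*} [Field k] [Monoid G] (V : FDRep k G) [Simple V] :
    Representation.IsIrreducible V.ρ := by
  have : Nontrivial (Subrepresentation V.ρ) := by
    refine ⟨⊥, ⊤, fun h => id_nonzero V ?_⟩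
    ext v
    exact (h.symm ▸ Submodule.mem_top : v ∈ (⊥ : Subrepresentation V.ρ))
  refine ⟨fun W => ?_⟩
  let i : FDRep.of W.toRepresentation ⟶ V := ⟨FGModuleCat.ofHom W.toSubmodule.subtype, fun _ => rfl⟩
  have : Mono i := ConcreteCategory.mono_of_injective i W.toSubmodule.subtype_injective
  by_cases hi : i = 0
  · left
    refine eq_bot_iff.2 fun v hv => ?_
    exact congr($hi (⟨v, hv⟩ : W.toSubmodule))
  · right
    have := isIso_of_mono_of_nonzero hi
    refine eq_top_iff.2 fun v _ => ?_
    obtain ⟨w, rfl⟩ := (FDRep.isoToLinearEquiv (asIso i)).surjective v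
    exact w.2

/-- Ito's theorem (divisibility form): if `A ⊴ G` is abelian, then every irreducible complex
character degree of `G` divides `|G : A|`. -/
theorem stmt_14 {G : Type} [Group G] [Fintype G]
    (A : Subgroup G) (hA : A.Normal)
    (habelian : ∀ x y : G, x ∈ A → y ∈ A → x * y = y * x)
    (V : FDRep ℂ G) [Simple V] :
    finrank ℂ V ∣ A.index := by
  have : IsMulCommutative A := ⟨⟨fun x y => Subtype.ext (habelian x y x.2 y.2)⟩⟩
  have := isIrreducible_of_simple V
  exact stmt_14_general V.ρ A
end
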